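/- Let δ ∈ D, let θ ∈ Θ(δ), and let α, β ∈ M_n with α ≺_θ β (β is a θ-cover of α). Then (i) if α is an idempotent of M_n then β is an idempotent of M_n, and (ii) if α ∈ J_n then β ∈ J_n. -/

import Mathlib

open Relation

/-! ### The partition monoid and its planar submonoids -/

/-- Vertices of a partition diagram: `Sum.inl i` is the upper vertex `i`,
`Sum.inr i` is the lower vertex `i′`. -/
abbrev PV (n : ℕ) := Fin n ⊕ Fin n

/-- An element of the partition monoid `P_n`: a set partition of the `2n` vertices,
encoded as an equivalence relation (setoid). -/
abbrev PElt (n : ℕ) := Setoid (PV n)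

/-- Three layers of vertices, used to form products. -/
abbrev TV (n : ℕ) := Fin n ⊕ (Fin n ⊕ Fin n)

/-- Embedding of the vertices of the upper factor into the three layers. -/
def upEmb {n : ℕ} : PV n → TV n
  | .inl i => .inl i
  | .inr i => .inr (.inl i)

/-- Embedding of the vertices of the lower factor into the three layers. -/
def downEmb {n : ℕ} : PV n → TV n
  | .inl i => .inr (.inl i)
  | .inr i => .inr (.inr i)

/-- Embedding of the vertices of the product into the three layers. -/
def outEmb {n : ℕ} : PV n → TV n
  | .inl i => .inl i
  | .inr i => .inr (.inr i)

/-- The stacked graph of `a` on `b`: relations of `a` on layers 1–2 together with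
relations of `b` on layers 2–3. -/
def stackRel {n : ℕ} (a b : PElt n) : TV n → TV n → Prop := fun x y =>
  (∃ p q : PV n, a.r p q ∧ x = upEmb p ∧ y = upEmb q) ∨
  (∃ p q : PV n, b.r p q ∧ x = downEmb p ∧ y = downEmb q)

/-- The finest common coarsening (transitive closure) of the stacked graph. -/
def stackSetoid {n : ℕ} (a b : PElt n) : Setoid (TV n) :=
  EqvGen.setoid (stackRel a b)

/-- The product in the partition monoid: restrict the coarsening of the stacked graph
to the outer two layers. -/
def pmul {n : ℕ} (a b : PElt n) : PElt n :=
  Setoid.comap outEmb (stackSetoid a b)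

/-- The identity of the partition monoid: blocks `{i, i′}`. -/
def pid (n : ℕ) : PElt n :=
  ⟨fun x y => Sum.elim id id x = Sum.elim id id y,
    ⟨fun _ => rfl, fun h => h.symm, fun h₁ h₂ => h₁.trans h₂⟩⟩

/-- A vertex of the triple-layer graph lies in the identified middle row. -/
def isMiddle {n : ℕ} : TV n → Prop
  | .inr (.inl _) => True
  | _ => False

/-- `m(a,b)`: the number of floating components (components of the stacked graph of `a` on `b`
contained entirely in the identified middle row). -/
noncomputable def floatCount {n : ℕ} (a b : PElt n) : ℕ :=
  Nat.card {c : Quotient (stackSetoid a b) //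
    ∀ x : TV n, Quotient.mk (stackSetoid a b) x = c → isMiddle x}

/-- A block (equivalence class) is a transversal if it contains both an upper
and a lower vertex. -/
def IsTransClass {n : ℕ} (a : PElt n) (c : Quotient a) : Prop :=
  (∃ i : Fin n, Quotient.mk a (.inl i) = c) ∧ (∃ j : Fin n, Quotient.mk a (.inr j) = c)

/-- The rank of a partition: the number of transversal blocks. -/
noncomputable def prank {n : ℕ} (a : PElt n) : ℕ :=
  Nat.card {c : Quotient a // IsTransClass a c}

/-- Position of a vertex in the boundary order `1, …, n, n′, …, 1′` of the rectangle. -/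
def ordIdx (n : ℕ) : PV n → ℕ
  | .inl i => i.val
  | .inr i => 2 * n - 1 - i.val

/-- Planarity: the partition is non-crossing with respect to the boundary order
`1 < ⋯ < n < n′ < ⋯ < 1′`. -/
def IsPlanar {n : ℕ} (a : PElt n) : Prop :=
  ¬ ∃ w x y z : PV n, ordIdx n w < ordIdx n x ∧ ordIdx n x < ordIdx n y ∧
      ordIdx n y < ordIdx n z ∧ a.r w y ∧ a.r x z ∧ ¬ a.r w x

/-- The size of the block containing a given vertex. -/
noncomputable def blockCard {n : ℕ} (a : PElt n) (x : PV n) : ℕ :=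
  Nat.card {y : PV n // a.r x y}

/-- The Motzkin monoid: planar partitions with all blocks of size at most 2. -/
def Motzkin (n : ℕ) : Set (PElt n) :=
  {a | IsPlanar a ∧ ∀ x : PV n, blockCard a x ≤ 2}

/-- The Jones (Temperley–Lieb) monoid: planar partitions with all blocks of size
exactly 2. -/
def Jones (n : ℕ) : Set (PElt n) :=
  {a | IsPlanar a ∧ ∀ x : PV n, blockCard a x = 2}

/-! ### The interface graph -/

/-- Lower edge of the interface graph `Γ(a)`: a block `{i,j}` of `a` on upper vertices. -/
def LowEdge {n : ℕ} (a : PElt n) (i j : Fin n) : Prop :=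
  i ≠ j ∧ a.r (.inl i) (.inl j)

/-- Upper edge of the interface graph `Γ(a)`: a block `{i′,j′}` of `a` on lower vertices. -/
def UpEdge {n : ℕ} (a : PElt n) (i j : Fin n) : Prop :=
  i ≠ j ∧ a.r (.inr i) (.inr j)

/-- Vertex `i` of `Γ(a)` carries a lower edge. -/
def hasLow {n : ℕ} (a : PElt n) (i : Fin n) : Prop := ∃ j, LowEdge a i j

/-- Vertex `i` of `Γ(a)` carries an upper edge. -/
def hasUp {n : ℕ} (a : PElt n) (i : Fin n) : Prop := ∃ j, UpEdge a i j

/-- Vertex `i` is active downwards: the upper vertex `i` lies in a transversal of `a`. -/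
def activeDown {n : ℕ} (a : PElt n) (i : Fin n) : Prop := ∃ j : Fin n, a.r (.inl i) (.inr j)

/-- Vertex `i` is active upwards: the lower vertex `i′` lies in a transversal of `a`. -/
def activeUp {n : ℕ} (a : PElt n) (i : Fin n) : Prop := ∃ j : Fin n, a.r (.inr i) (.inl j)

/-- Vertex `i` is inert downwards: the upper vertex `i` is a singleton block of `a`. -/
def inertDown {n : ℕ} (a : PElt n) (i : Fin n) : Prop := ∀ y, a.r (.inl i) y → y = .inl i

/-- Vertex `i` is inert upwards: the lower vertex `i′` is a singleton block of `a`. -/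
def inertUp {n : ℕ} (a : PElt n) (i : Fin n) : Prop := ∀ y, a.r (.inr i) y → y = .inr i

/-- Adjacency in the interface graph `Γ(a)`. -/
def gedge {n : ℕ} (a : PElt n) (i j : Fin n) : Prop := LowEdge a i j ∨ UpEdge a i j

/-- Connectivity in the interface graph `Γ(a)`. -/
def gconn {n : ℕ} (a : PElt n) : Fin n → Fin n → Prop := EqvGen (gedge a)

/-- `θ` is (the vertex set of) a connected component of `Γ(a)`. -/
def IsComp {n : ℕ} (a : PElt n) (θ : Set (Fin n)) : Prop :=
  θ.Nonempty ∧ ∀ i ∈ θ, ∀ j : Fin n, (gconn a i j ↔ j ∈ θ)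

/-- `θ` is a cycle component of `Γ(a)`: every vertex carries both a lower and an upper edge. -/
def IsCycleComp {n : ℕ} (a : PElt n) (θ : Set (Fin n)) : Prop :=
  IsComp a θ ∧ ∀ i ∈ θ, hasLow a i ∧ hasUp a i

/-- `θ` is a path component of `Γ(a)`: some vertex misses an edge on some side. -/
def IsPathComp {n : ℕ} (a : PElt n) (θ : Set (Fin n)) : Prop :=
  IsComp a θ ∧ ∃ i ∈ θ, ¬ hasLow a i ∨ ¬ hasUp a i

/-- An inert path: every terminus is inert on its free side. -/
def IsInertPathComp {n : ℕ} (a : PElt n) (θ : Set (Fin n)) : Prop :=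
  IsPathComp a θ ∧ ∀ i ∈ θ,
    (¬ hasLow a i → inertDown a i) ∧ (¬ hasUp a i → inertUp a i)

/-- A trans-active path: even length (its two free ends lie on opposite sides) with
both termini active on their free sides. -/
def IsTransActivePathComp {n : ℕ} (a : PElt n) (θ : Set (Fin n)) : Prop :=
  IsPathComp a θ ∧
  (∃! i : Fin n, i ∈ θ ∧ ¬ hasLow a i) ∧ (∃! i : Fin n, i ∈ θ ∧ ¬ hasUp a i) ∧
  ∀ i ∈ θ, (¬ hasLow a i → activeDown a i) ∧ (¬ hasUp a i → activeUp a i)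

/-- The number of edges of `Γ(a)` contained in `θ` (its length, for a component `θ`). -/
noncomputable def compEdgeCount {n : ℕ} (a : PElt n) (θ : Set (Fin n)) : ℕ :=
  Nat.card {p : Fin n × Fin n // p.1 < p.2 ∧ p.1 ∈ θ ∧ p.2 ∈ θ ∧ LowEdge a p.1 p.2} +
  Nat.card {p : Fin n × Fin n // p.1 < p.2 ∧ p.1 ∈ θ ∧ p.2 ∈ θ ∧ UpEdge a p.1 p.2}

/-! ### The map `α ↦ α̂` and the sets `D`, `Θ(δ)` -/

/-- The 0-based position of `i` among the upward-active vertices. -/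
noncomputable def posUp {n : ℕ} (a : PElt n) (i : Fin n) : ℕ :=
  Nat.card {j : Fin n // j < i ∧ activeUp a j}

/-- The 0-based position of `i` among the downward-active vertices. -/
noncomputable def posDown {n : ℕ} (a : PElt n) (i : Fin n) : ℕ :=
  Nat.card {j : Fin n // j < i ∧ activeDown a j}

/-- `i` and `j` are consecutive upward-active vertices paired in forming `α̂`
(`i` in an even position `2t`, `j` in position `2t+1 < 2⌊r/2⌋`). -/
noncomputable def pairedUp {n : ℕ} (a : PElt n) (i j : Fin n) : Prop :=
  activeUp a i ∧ activeUp a j ∧ Even (posUp a i) ∧ posUp a j = posUp a i + 1 ∧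
    posUp a j < 2 * (prank a / 2)

/-- `i` and `j` are consecutive downward-active vertices paired in forming `α̂`. -/
noncomputable def pairedDown {n : ℕ} (a : PElt n) (i j : Fin n) : Prop :=
  activeDown a i ∧ activeDown a j ∧ Even (posDown a i) ∧ posDown a j = posDown a i + 1 ∧
    posDown a j < 2 * (prank a / 2)

/-- The transversal relations removed in forming `α̂` (those of the first `2⌊r/2⌋`
transversals). -/
noncomputable def removedTrans {n : ℕ} (a : PElt n) (x y : PV n) : Prop :=
  ∃ i j : Fin n, a.r (.inl i) (.inr j) ∧ posDown a i < 2 * (prank a / 2) ∧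
    ((x = .inl i ∧ y = .inr j) ∨ (x = .inr j ∧ y = .inl i))

/-- The generating relation of `α̂`: the relations of `α` minus the removed transversals,
plus the new blocks pairing consecutive active vertices. -/
noncomputable def hatRel {n : ℕ} (a : PElt n) (x y : PV n) : Prop :=
  (a.r x y ∧ ¬ removedTrans a x y) ∨
  (∃ i j : Fin n, pairedUp a i j ∧
      ((x = .inr i ∧ y = .inr j) ∨ (x = .inr j ∧ y = .inr i))) ∨
  (∃ i j : Fin n, pairedDown a i j ∧
      ((x = .inl i ∧ y = .inl j) ∨ (x = .inl j ∧ y = .inl i)))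

/-- The element `α̂` obtained from `α` by pairing off consecutive active vertices. -/
noncomputable def hat {n : ℕ} (a : PElt n) : PElt n := EqvGen.setoid (hatRel a)

/-- The idempotents of a subset `S` (with respect to the partition product). -/
def Eset {n : ℕ} (S : Set (PElt n)) : Set (PElt n) := {a ∈ S | pmul a a = a}

/-- `D(S) = D₀ ∪ E(D₁)`: the idempotents of `S` of rank at most 1. -/
def Dset {n : ℕ} (S : Set (PElt n)) : Set (PElt n) :=
  {d ∈ S | pmul d d = d ∧ prank d ≤ 1}

/-- `θ` lies (entirely) to the left of the leftmost transversal of `a`. -/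
def LeftOfTrans {n : ℕ} (a : PElt n) (θ : Set (Fin n)) : Prop :=
  ∀ i ∈ θ, ∀ j : Fin n, activeDown a j ∨ activeUp a j → i < j

/-- `Θ(a)`: the cycle components of `Γ(a)` lying entirely to the left of the leftmost
transversal. -/
def ThetaSet {n : ℕ} (a : PElt n) : Set (Set (Fin n)) :=
  {θ | IsCycleComp a θ ∧ LeftOfTrans a θ}

/-! ### Returns, special pairs and `θ`-covers -/

/-- The block `{i,j}` of `a` on upper vertices is an upper return: no upper block
`{k,l}` has `k<i<j<l`, and no transversal contains an upper vertex smaller than `i`. -/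
def UpperReturn {n : ℕ} (a : PElt n) (i j : Fin n) : Prop :=
  i < j ∧ a.r (.inl i) (.inl j) ∧
  (¬ ∃ k l : Fin n, k < i ∧ j < l ∧ a.r (.inl k) (.inl l)) ∧
  (¬ ∃ k : Fin n, k < i ∧ activeDown a k)

/-- The block `{i′,j′}` of `a` on lower vertices is a lower return. -/
def LowerReturn {n : ℕ} (a : PElt n) (i j : Fin n) : Prop :=
  i < j ∧ a.r (.inr i) (.inr j) ∧
  (¬ ∃ k l : Fin n, k < i ∧ j < l ∧ a.r (.inr k) (.inr l)) ∧
  (¬ ∃ k : Fin n, k < i ∧ activeUp a k)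

/-- The interface-graph adjacency of `a` after deleting the lower-vertex block `{i′,j′}`
and the upper-vertex block `{k,l}`. -/
def redEdge {n : ℕ} (a : PElt n) (i j k l : Fin n) (u v : Fin n) : Prop :=
  (LowEdge a u v ∧ ({u, v} : Set (Fin n)) ≠ {k, l}) ∨
  (UpEdge a u v ∧ ({u, v} : Set (Fin n)) ≠ {i, j})

/-- The relation generating the `θ`-cover `a − (e′,f)`, for `e′ = {i′,j′}` and
`f = {k,l}`: delete the two blocks, and join each freed upper vertex to the freed lower
vertex reached along its path. -/
def coverRel {n : ℕ} (a : PElt n) (i j k l : Fin n) (x y : PV n) : Prop :=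
  (a.r x y ∧ ({x, y} : Set (PV n)) ≠ {.inl k, .inl l} ∧
    ({x, y} : Set (PV n)) ≠ {.inr i, .inr j}) ∨
  (∃ u v : Fin n, u ∈ ({k, l} : Set (Fin n)) ∧ v ∈ ({i, j} : Set (Fin n)) ∧
    EqvGen (redEdge a i j k l) u v ∧
    ((x = .inl u ∧ y = .inr v) ∨ (x = .inr v ∧ y = .inl u)))

/-- The `θ`-cover `a − (e′,f)` as a partition. -/
def coverElt {n : ℕ} (a : PElt n) (i j k l : Fin n) : PElt n :=
  EqvGen.setoid (coverRel a i j k l)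

/-- `b` is a `θ`-cover of `a`: `θ ∈ Θ(a)` and `b = a − (e′,f)` for some special pair
`(e′,f)` over `θ` (one lower-return and one upper-return edge of `θ`). -/
def IsThetaCover {n : ℕ} (a : PElt n) (θ : Set (Fin n)) (b : PElt n) : Prop :=
  θ ∈ ThetaSet a ∧
  ∃ i j k l : Fin n, i ∈ θ ∧ j ∈ θ ∧ k ∈ θ ∧ l ∈ θ ∧
    LowerReturn a i j ∧ UpperReturn a k l ∧ b = coverElt a i j k l

/-- `a ≪_d b`: `a = b` or there is a chain of `θ`-covers from `a` to `b` along pairwise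
distinct cycles `θ ∈ Θ(d)`. -/
def llRel {n : ℕ} (d : PElt n) (a b : PElt n) : Prop :=
  a = b ∨ ∃ (h : ℕ) (θs : Fin h → Set (Fin n)) (as : Fin (h + 1) → PElt n),
    Function.Injective θs ∧ (∀ ι, θs ι ∈ ThetaSet d) ∧
    as 0 = a ∧ as (Fin.last h) = b ∧
    ∀ ι : Fin h, IsThetaCover (as ι.castSucc) (θs ι) (as ι.succ)

/-- The fibre `F_d = {α ∈ E(S) : α̂ = d}`. -/
def Fib {n : ℕ} (S : Set (PElt n)) (d : PElt n) : Set (PElt n) :=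
  {a ∈ Eset S | hat a = d}

/-- `C_d(θ) = C*_d(θ) ∪ {d}`, where `C*_d(θ)` is the set of `θ`-covers of `d`. -/
def CoverSet {n : ℕ} (d : PElt n) (θ : Set (Fin n)) : Set (PElt n) :=
  insert d {b | IsThetaCover d θ b}

/-- `u_θ`: the number of upper-return blocks among the edges of `θ`. -/
noncomputable def uRet {n : ℕ} (a : PElt n) (θ : Set (Fin n)) : ℕ :=
  Nat.card {p : Fin n × Fin n // p.1 ∈ θ ∧ p.2 ∈ θ ∧ UpperReturn a p.1 p.2}

/-- `l_θ`: the number of lower-return blocks among the edges of `θ`. -/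
noncomputable def lRet {n : ℕ} (a : PElt n) (θ : Set (Fin n)) : ℕ :=
  Nat.card {p : Fin n × Fin n // p.1 ∈ θ ∧ p.2 ∈ θ ∧ LowerReturn a p.1 p.2}

/-! ### Twisted semigroup algebras -/

variable {K : Type} [Field K]

/-- The underlying vector space of the semigroup algebra `k[P_n]`. -/
abbrev PAlg (n : ℕ) (K : Type) [Field K] := PElt n →₀ K

/-- The twisted multiplication on `k[P_n]`: on basis elements,
`a ∘ b = ξ^{m(a,b)} · (ab)`, extended bilinearly. -/
noncomputable def twistMul {n : ℕ} (ξ : K) (f g : PAlg n K) : PAlg n K :=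
  f.sum fun a ca => g.sum fun b cb =>
    Finsupp.single (pmul a b) (ca * cb * ξ ^ floatCount a b)

/-- The twisted variant `S^ξ`: the subsemigroup of `(k[S], ∘)` generated by (the basis
elements corresponding to) `S`. -/
def TwistedVariant {n : ℕ} (ξ : K) (S : Set (PElt n)) : Set (PAlg n K) :=
  ⋂₀ {T : Set (PAlg n K) | (∀ a ∈ S, Finsupp.single a (1 : K) ∈ T) ∧
      ∀ f ∈ T, ∀ g ∈ T, twistMul ξ f g ∈ T}

/-- The idempotents of a set of elements of the twisted algebra. -/
def EsetTwist {n : ℕ} (ξ : K) (X : Set (PAlg n K)) : Set (PAlg n K) :=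
  {f ∈ X | twistMul ξ f f = f}

/-- `⟨S^ξ, ξ·1⟩ = {ξ^i·α : i ∈ ℕ, α ∈ S}`. -/
def TwistNat {n : ℕ} (ξ : K) (S : Set (PElt n)) : Set (PAlg n K) :=
  {f | ∃ (i : ℕ), ∃ a ∈ S, f = Finsupp.single a (ξ ^ i)}

/-- `⟨S^ξ, ξ·1, ξ⁻¹·1⟩ = {ξ^i·α : i ∈ ℤ, α ∈ S}`. -/
def TwistInt {n : ℕ} (ξ : K) (S : Set (PElt n)) : Set (PAlg n K) :=
  {f | ∃ (i : ℤ), ∃ a ∈ S, f = Finsupp.single a (ξ ^ i)}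

/-! ### Idempotent statistics of the Jones monoid -/

/-- The number of cycle components of `Γ(a)`. -/
noncomputable def numCycles {n : ℕ} (a : PElt n) : ℕ :=
  Nat.card {θ : Set (Fin n) // IsCycleComp a θ}

/-- The number of path components of `Γ(a)`. -/
noncomputable def numPaths {n : ℕ} (a : PElt n) : ℕ :=
  Nat.card {θ : Set (Fin n) // IsPathComp a θ}

/-- `E_{n;c,p}`: the idempotents of the Jones monoid `J_n` with `c` cycle components and
`p` path components (out-of-range indices give the empty set). -/
def EJcp (n : ℕ) (c p : ℤ) : Set (PElt n) :=
  {a ∈ Jones n | pmul a a = a ∧ (numCycles a : ℤ) = c ∧ (numPaths a : ℤ) = p}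

/-- `e_{n;c,p} = |E_{n;c,p}|`. -/
noncomputable def eJ (n : ℕ) (c p : ℤ) : ℕ := Nat.card (EJcp n c p)

/-- `e_{n;·,p} = Σ_c e_{n;c,p}`: the number of idempotents of `J_n` of rank `p`. -/
noncomputable def eJdot (n : ℕ) (p : ℤ) : ℕ :=
  Nat.card {a : PElt n | a ∈ Jones n ∧ pmul a a = a ∧ (numPaths a : ℤ) = p}

/-- `S^{(1)}_{n;c,p} = Σ_{α ∈ E_{n;c,p}} Σ_{θ ∈ Θ(α)} (u_θ + l_θ)`. -/
noncomputable def S1 (n : ℕ) (c p : ℤ) : ℕ :=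
  ∑ᶠ a ∈ EJcp n c p, ∑ᶠ θ ∈ ThetaSet a, (uRet a θ + lRet a θ)

/-- `S^{(2)}_{n;c,p} = Σ_{α ∈ E_{n;c,p}} Σ_{θ₁ ≠ θ₂ ∈ Θ(α)} u_{θ₁}·l_{θ₂}`
(the inner sum over ordered pairs of distinct cycles). -/
noncomputable def S2 (n : ℕ) (c p : ℤ) : ℕ :=
  ∑ᶠ a ∈ EJcp n c p, ∑ᶠ q ∈ {q : Set (Fin n) × Set (Fin n) |
      q.1 ∈ ThetaSet a ∧ q.2 ∈ ThetaSet a ∧ q.1 ≠ q.2}, uRet a q.1 * lRet a q.2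

/-- `S^{(1)}_{n;·,p}`. -/
noncomputable def S1dot (n : ℕ) (p : ℤ) : ℕ :=
  ∑ᶠ a ∈ {a : PElt n | a ∈ Jones n ∧ pmul a a = a ∧ (numPaths a : ℤ) = p},
    ∑ᶠ θ ∈ ThetaSet a, (uRet a θ + lRet a θ)

/-- `S^{(2)}_{n;·,p}`. -/
noncomputable def S2dot (n : ℕ) (p : ℤ) : ℕ :=
  ∑ᶠ a ∈ {a : PElt n | a ∈ Jones n ∧ pmul a a = a ∧ (numPaths a : ℤ) = p},
    ∑ᶠ q ∈ {q : Set (Fin n) × Set (Fin n) |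
      q.1 ∈ ThetaSet a ∧ q.2 ∈ ThetaSet a ∧ q.1 ≠ q.2}, uRet a q.1 * lRet a q.2

/-!
In the cover `β` the freed vertices are related exactly when what is left of `θ` joins their
columns, and all other vertices are related as in `α`. The stack of `β` on itself arises in the same
way from the stack of `α` on itself: the middle copy of `θ`, together with the freed outer vertices,
falls into the two paths, and nothing else changes. Restricting to the outer rows, `ββ` is obtained
from `αα` exactly as `β` is obtained from `α`, whence the claim on idempotents. For the claim on the
Jones monoid, every freed vertex is joined to a freed vertex of the other row, by a parity argument
on the edges which alternate along `θ`.
-/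

/-! ### Gluing equivalence relations -/

section Gluing

variable {α β : Type*}

/-- The equivalence relation for which `P` is a union of classes, agreeing with `r` on `P` and
with `s` on the complement of `P`. -/
abbrev piecewiseSetoid (P : Set α) (r s : Setoid α) : Setoid α where
  r x y := (x ∈ P ∧ y ∈ P ∧ r x y) ∨ (x ∉ P ∧ y ∉ P ∧ s x y)
  iseqv :=
    { refl := fun x => (em (x ∈ P)).imp (fun h => ⟨h, h, r.refl x⟩) fun h => ⟨h, h, s.refl x⟩
      symm := Or.imp (fun ⟨hx, hy, h⟩ => ⟨hy, hx, r.symm h⟩) fun ⟨hx, hy, h⟩ => ⟨hy, hx, s.symm h⟩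
      trans := by
        rintro x y z (⟨hx, hy, hxy⟩ | ⟨hx, hy, hxy⟩) (⟨hy', hz, hyz⟩ | ⟨hy', hz, hyz⟩)
        exacts [.inl ⟨hx, hz, r.trans hxy hyz⟩, absurd hy hy', absurd hy' hy,
          .inr ⟨hx, hz, s.trans hxy hyz⟩] }

theorem comap_piecewiseSetoid (f : β → α) (P : Set α) (r s : Setoid α) :
    (piecewiseSetoid P r s).comap f = piecewiseSetoid (f ⁻¹' P) (r.comap f) (s.comap f) :=
  rfl

end Gluing

/-! ### Cycles alternating between two matchings -/

section Matchings

variable {V : Type*}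

theorem even_ncard_of_existsUnique_adj [Finite V] {G : SimpleGraph V} {C : Set V}
    (hunique : ∀ x ∈ C, ∃! y, G.Adj x y) (hclosed : ∀ x ∈ C, ∀ y, G.Adj x y → y ∈ C) :
    Even C.ncard := by
  have hmatch : ((⊤ : G.Subgraph).induce C).IsMatching := fun x hx => by
    obtain ⟨y, hxy, huniq⟩ := hunique x hx
    exact ⟨y, ⟨hx, hclosed x hx y hxy, hxy⟩, fun z hz => huniq z hz.2.2⟩
  have := Fintype.ofFinite ((⊤ : G.Subgraph).induce C).verts
  change Even ((⊤ : G.Subgraph).induce C).verts.ncard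
  rw [Set.ncard_eq_toFinset_card']
  exact hmatch.even_card

theorem mem_of_reachable_of_closed {G : SimpleGraph V} {C : Set V}
    (hclosed : ∀ x ∈ C, ∀ y, G.Adj x y → y ∈ C) {x y : V} (hx : x ∈ C) (hxy : G.Reachable x y) :
    y ∈ C := by
  obtain ⟨p⟩ := hxy
  induction p with
  | nil => exact hx
  | cons hadj _ ih => exact ih (hclosed _ hx _ hadj)

theorem exists_mem_rel_of_alternating_cycle [Finite V] {L U : SimpleGraph V} {k : V} {e f : Sym2 V}
    (hL : ∀ x, (L ⊔ U).Reachable k x → ∃! y, L.Adj x y)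
    (hU : ∀ x, (L ⊔ U).Reachable k x → ∃! y, U.Adj x y)
    (he : e ∈ L.edgeSet) (hk : k ∈ e) {i : V} (hi : i ∈ f) (hki : (L ⊔ U).Reachable k i)
    {r : Setoid V} (hrL : ∀ x y, L.Adj x y → s(x, y) ≠ e → r x y)
    (hrU : ∀ x y, U.Adj x y → s(x, y) ≠ f → r x y) :
    ∃ v ∈ f, r k v := by
  by_contra! hf
  obtain ⟨l, rfl⟩ := hk
  have hkl : L.Adj k l := he
  -- If `r` does not join `k` to `f`, then `U` perfectly matches the part `C` of the cycle joined
  -- to `k`, whereas `L` perfectly matches `C \ {k}`, unless `C` is the whole cycle.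
  let C : Set V := {x | (L ⊔ U).Reachable k x ∧ r k x}
  have hkC : k ∈ C := ⟨.rfl, r.refl k⟩
  have hUC : ∀ x ∈ C, ∀ y, U.Adj x y → y ∈ C := fun x hx y hxy =>
    ⟨hx.1.trans (SimpleGraph.Adj.reachable (.inr hxy)),
      r.trans hx.2 (hrU x y hxy fun h => hf x (h ▸ Sym2.mem_mk_left x y) hx.2)⟩
  have hLC : ∀ x ∈ C, ∀ y, L.Adj x y → s(x, y) ≠ s(k, l) → y ∈ C := fun x hx y hxy hne =>
    ⟨hx.1.trans (SimpleGraph.Adj.reachable (.inl hxy)), r.trans hx.2 (hrL x y hxy hne)⟩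
  by_cases hlC : l ∈ C
  · have hclosed : ∀ x ∈ C, ∀ y, (L ⊔ U).Adj x y → y ∈ C := by
      rintro x hx y (hxy | hxy)
      · by_cases hne : s(x, y) = s(k, l)
        · rcases Sym2.eq_iff.1 hne with ⟨-, rfl⟩ | ⟨-, rfl⟩
          exacts [hlC, hkC]
        · exact hLC x hx y hxy hne
      · exact hUC x hx y hxy
    exact hf i hi (mem_of_reachable_of_closed hclosed hkC hki).2
  · have heven : Even C.ncard := even_ncard_of_existsUnique_adj (fun x hx => hU x hx.1) hUC
    have heven' : Even (C \ {k}).ncard := by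
      refine even_ncard_of_existsUnique_adj (fun x hx => hL x hx.1.1) ?_
      rintro x ⟨hxC, hxk⟩ y hxy
      refine ⟨hLC x hxC y hxy ?_, ?_⟩
      · rintro h
        rcases Sym2.eq_iff.1 h with ⟨rfl, -⟩ | ⟨rfl, -⟩
        exacts [hxk rfl, hlC hxC]
      · rintro rfl
        exact hlC ((hL y .rfl).unique hxy.symm hkl ▸ hxC)
    rw [← Set.ncard_sdiff_singleton_add_one hkC, Nat.even_add_one] at heven
    exact heven heven'

theorem pair_eq_pair_iff_sym2_eq {u v x y : V} :
    ({u, v} : Set V) = {x, y} ↔ s(u, v) = s(x, y) := by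
  rw [← Sym2.coe_mk, ← Sym2.coe_mk, SetLike.coe_set_eq]

end Matchings

/-! ### Blocks and products of partitions -/

section Partitions

variable {n : ℕ} {a : PElt n}

theorem two_le_blockCard_iff {x : PV n} : 2 ≤ blockCard a x ↔ ∃ y ≠ x, a.r x y := by
  change 1 < {y | a.r x y}.ncard ↔ _
  rw [Set.one_lt_ncard_iff_nontrivial,
    Set.nontrivial_iff_exists_ne (s := {y | a.r x y}) (a.refl x)]
  exact exists_congr fun _ => and_comm

theorem eq_of_rel_of_blockCard_le_two {x y z : PV n} (hx : blockCard a x ≤ 2) (hyx : y ≠ x)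
    (hzx : z ≠ x) (hxy : a.r x y) (hxz : a.r x z) : y = z := by
  by_contra hyz
  exact hx.not_gt ((Set.two_lt_ncard_iff (s := {w | a.r x w})).2
    ⟨x, y, z, a.refl x, hxy, hxz, hyx.symm, hzx.symm, hyz⟩)

theorem stackSetoid_le_iff {b : PElt n} {s : Setoid (TV n)} :
    stackSetoid a b ≤ s ↔ a ≤ s.comap upEmb ∧ b ≤ s.comap downEmb := by
  refine ⟨fun h => ⟨fun x y hxy => h (.rel _ _ (.inl ⟨x, y, hxy, rfl, rfl⟩)),
    fun x y hxy => h (.rel _ _ (.inr ⟨x, y, hxy, rfl, rfl⟩))⟩, fun h => Setoid.eqvGen_le ?_⟩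
  rintro _ _ (⟨x, y, hxy, rfl, rfl⟩ | ⟨x, y, hxy, rfl, rfl⟩)
  exacts [h.1 hxy, h.2 hxy]

theorem le_comap_upEmb_stackSetoid {b : PElt n} : a ≤ (stackSetoid a b).comap upEmb :=
  (stackSetoid_le_iff.1 le_rfl).1

theorem le_comap_downEmb_stackSetoid {b : PElt n} : b ≤ (stackSetoid a b).comap downEmb :=
  (stackSetoid_le_iff.1 le_rfl).2

/-- The graph of lower edges of the interface graph `Γ(a)`. -/
def lowGraph (a : PElt n) : SimpleGraph (Fin n) where
  Adj := LowEdge a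
  symm := ⟨fun _ _ h => ⟨h.1.symm, a.symm h.2⟩⟩
  loopless := ⟨fun _ h => h.1 rfl⟩

/-- The graph of upper edges of the interface graph `Γ(a)`. -/
def upGraph (a : PElt n) : SimpleGraph (Fin n) where
  Adj := UpEdge a
  symm := ⟨fun _ _ h => ⟨h.1.symm, a.symm h.2⟩⟩
  loopless := ⟨fun _ h => h.1 rfl⟩

theorem gconn_iff_reachable {x y : Fin n} :
    gconn a x y ↔ (lowGraph a ⊔ upGraph a).Reachable x y := by
  refine ⟨fun h => Setoid.eqvGen_le (s := (lowGraph a ⊔ upGraph a).reachableSetoid)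
    (fun _ _ h => SimpleGraph.Adj.reachable h) h, fun h => ?_⟩
  rw [SimpleGraph.reachable_iff_reflTransGen] at h
  exact EqvGen.reflTransGen_le_eqvGen _ _ _ h

/-- The position in the row of a vertex of a partition diagram. -/
def column : PV n → Fin n := Sum.elim id id

/-- The position in the row of a vertex of a stack of two partition diagrams. -/
def stackColumn : TV n → Fin n := Sum.elim id column

/-- The vertices of a partition diagram which lie in `A` (upper row) or in `B` (lower row). -/
def rows (A B : Set (Fin n)) : Set (PV n) :=
  {x | Sum.elim (· ∈ A) (· ∈ B) x}

theorem comap_stackColumn_upEmb {r : Setoid (Fin n)} :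
    (r.comap stackColumn).comap upEmb = r.comap column := by
  ext (_ | _) (_ | _) <;> rfl

theorem comap_stackColumn_downEmb {r : Setoid (Fin n)} :
    (r.comap stackColumn).comap downEmb = r.comap column := by
  ext (_ | _) (_ | _) <;> rfl

theorem comap_stackColumn_outEmb {r : Setoid (Fin n)} :
    (r.comap stackColumn).comap outEmb = r.comap column := by
  ext (_ | _) (_ | _) <;> rfl

end Partitions

section Components

variable {n : ℕ} {a : PElt n} {θ : Set (Fin n)} {x y : Fin n}

theorem IsComp.mem_of_reachable (h : IsComp a θ) (hx : x ∈ θ)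
    (hxy : (lowGraph a ⊔ upGraph a).Reachable x y) : y ∈ θ :=
  (h.2 x hx y).1 (gconn_iff_reachable.2 hxy)

theorem IsComp.reachable (h : IsComp a θ) (hx : x ∈ θ) (hy : y ∈ θ) :
    (lowGraph a ⊔ upGraph a).Reachable x y :=
  gconn_iff_reachable.1 ((h.2 x hx y).2 hy)

theorem IsComp.mem_of_lowEdge (h : IsComp a θ) (hx : x ∈ θ) (hxy : LowEdge a x y) : y ∈ θ :=
  (h.2 x hx y).1 (.rel _ _ (.inl hxy))

theorem IsComp.mem_of_upEdge (h : IsComp a θ) (hx : x ∈ θ) (hxy : UpEdge a x y) : y ∈ θ :=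
  (h.2 x hx y).1 (.rel _ _ (.inr hxy))

theorem existsUnique_lowEdge (ha : blockCard a (.inl x) ≤ 2) (hx : hasLow a x) :
    ∃! y, LowEdge a x y := by
  obtain ⟨y, hne, hxy⟩ := hx
  exact ⟨y, ⟨hne, hxy⟩, fun z hz => Sum.inl_injective <| eq_of_rel_of_blockCard_le_two ha
    (Sum.inl_injective.ne hz.1.symm) (Sum.inl_injective.ne hne.symm) hz.2 hxy⟩

theorem existsUnique_upEdge (ha : blockCard a (.inr x) ≤ 2) (hx : hasUp a x) :
    ∃! y, UpEdge a x y := by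
  obtain ⟨y, hne, hxy⟩ := hx
  exact ⟨y, ⟨hne, hxy⟩, fun z hz => Sum.inr_injective <| eq_of_rel_of_blockCard_le_two ha
    (Sum.inr_injective.ne hz.1.symm) (Sum.inr_injective.ne hne.symm) hz.2 hxy⟩

theorem exists_inl_of_rel_inl (ha : blockCard a (.inl x) ≤ 2) (hx : hasLow a x) {z : PV n}
    (hz : a.r (.inl x) z) : ∃ y, z = .inl y := by
  by_cases hzx : z = .inl x
  · exact ⟨x, hzx⟩
  obtain ⟨y, hne, hxy⟩ := hx
  exact ⟨y, eq_of_rel_of_blockCard_le_two ha hzx (Sum.inl_injective.ne hne.symm) hz hxy⟩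

theorem exists_inr_of_rel_inr (ha : blockCard a (.inr x) ≤ 2) (hx : hasUp a x) {z : PV n}
    (hz : a.r (.inr x) z) : ∃ y, z = .inr y := by
  by_cases hzx : z = .inr x
  · exact ⟨x, hzx⟩
  obtain ⟨y, hne, hxy⟩ := hx
  exact ⟨y, eq_of_rel_of_blockCard_le_two ha hzx (Sum.inr_injective.ne hne.symm) hz hxy⟩

theorem mem_pair_of_lowEdge {k l u v : Fin n} (ha : ∀ x, blockCard a x ≤ 2)
    (hkl : LowEdge a k l) (hu : u ∈ ({k, l} : Set (Fin n))) (huv : LowEdge a u v) :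
    v ∈ ({k, l} : Set (Fin n)) := by
  have hunique := existsUnique_lowEdge (ha _) ⟨v, huv⟩
  rcases hu with rfl | rfl
  exacts [.inr (hunique.unique huv hkl), .inl (hunique.unique huv ((lowGraph a).adj_symm hkl))]

theorem mem_pair_of_upEdge {i j u v : Fin n} (ha : ∀ x, blockCard a x ≤ 2)
    (hij : UpEdge a i j) (hu : u ∈ ({i, j} : Set (Fin n))) (huv : UpEdge a u v) :
    v ∈ ({i, j} : Set (Fin n)) := by
  have hunique := existsUnique_upEdge (ha _) ⟨v, huv⟩
  rcases hu with rfl | rfl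
  exacts [.inr (hunique.unique huv hij), .inl (hunique.unique huv ((upGraph a).adj_symm hij))]

end Components

/-! ### Deleting a pair of edges from a cycle -/

/-- The pair `(e′,f)`, with `e′ = {i′,j′}` and `f = {k,l}`, consists of an upper and a lower edge
of the cycle component `θ` of `Γ(a)`. This is a special pair over `θ`, except that the two blocks
need not be returns. -/
structure IsCyclePair {n : ℕ} (a : PElt n) (θ : Set (Fin n)) (i j k l : Fin n) : Prop where
  isCycleComp : IsCycleComp a θ
  upEdge : UpEdge a i j
  lowEdge : LowEdge a k l
  mem_up : i ∈ θ
  mem_low : k ∈ θ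

/-- Connectivity in the interface graph `Γ(a)` after deletion of the upper edge `{i,j}` and the
lower edge `{k,l}`. -/
abbrev redSetoid {n : ℕ} (a : PElt n) (i j k l : Fin n) : Setoid (Fin n) :=
  EqvGen.setoid (redEdge a i j k l)

/-- The vertices of the blocks `{i′,j′}` and `{k,l}`, which become active in `a − (e′,f)`. -/
abbrev freed {n : ℕ} (i j k l : Fin n) : Set (PV n) :=
  rows {k, l} {i, j}

/-- The vertices of `A` (upper row) and `B` (lower row) form a union of blocks of `a`, contain the
freed vertices and lie on the cycle `θ`. -/
structure IsCycleRows {n : ℕ} (a : PElt n) (θ : Set (Fin n)) (i j k l : Fin n)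
    (A B : Set (Fin n)) : Prop where
  low_subset : {k, l} ⊆ A
  up_subset : {i, j} ⊆ B
  subset_low : A ⊆ θ
  subset_up : B ⊆ θ
  low_closed : ∀ u ∈ A, ∀ v, LowEdge a u v → v ∈ A
  up_closed : ∀ u ∈ B, ∀ v, UpEdge a u v → v ∈ B

/-- The vertices of the stack of `a − (e′,f)` on itself which lie on the two paths into which the
cycle `θ` is cut: the middle copy of `θ` and the freed outer vertices. -/
def stackCycle {n : ℕ} (θ : Set (Fin n)) (i j k l : Fin n) : Set (TV n) :=
  {z | Sum.elim (· ∈ ({k, l} : Set (Fin n))) (Sum.elim (· ∈ θ) (· ∈ ({i, j} : Set (Fin n)))) z}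

theorem upEmb_preimage_stackCycle {n : ℕ} {θ : Set (Fin n)} {i j k l : Fin n} :
    upEmb ⁻¹' stackCycle θ i j k l = rows {k, l} θ := by
  ext (_ | _) <;> rfl

theorem downEmb_preimage_stackCycle {n : ℕ} {θ : Set (Fin n)} {i j k l : Fin n} :
    downEmb ⁻¹' stackCycle θ i j k l = rows θ {i, j} := by
  ext (_ | _) <;> rfl

theorem outEmb_preimage_stackCycle {n : ℕ} {θ : Set (Fin n)} {i j k l : Fin n} :
    outEmb ⁻¹' stackCycle θ i j k l = freed i j k l := by
  ext (_ | _) <;> rfl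

section Cover

variable {n : ℕ} {a : PElt n} {θ : Set (Fin n)} {i j k l : Fin n}

theorem coverElt_rel_of_rel {x y : PV n} (hxy : a.r x y) (hx : x ∉ freed i j k l) :
    coverElt a i j k l x y := by
  refine .rel _ _ (.inl ⟨hxy, fun h => hx ?_, fun h => hx ?_⟩)
  · obtain rfl | rfl : x ∈ ({.inl k, .inl l} : Set (PV n)) := h ▸ .inl rfl
    exacts [.inl rfl, .inr rfl]
  · obtain rfl | rfl : x ∈ ({.inr i, .inr j} : Set (PV n)) := h ▸ .inl rfl
    exacts [.inl rfl, .inr rfl]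

theorem coverElt_rel_inl_inr {u v : Fin n} (hu : u ∈ ({k, l} : Set (Fin n)))
    (hv : v ∈ ({i, j} : Set (Fin n))) (huv : redSetoid a i j k l u v) :
    coverElt a i j k l (.inl u) (.inr v) :=
  .rel _ _ (.inr ⟨u, v, hu, hv, huv, .inl ⟨rfl, rfl⟩⟩)

theorem redSetoid_le_comap_stackSetoid :
    redSetoid a i j k l ≤
      (stackSetoid (coverElt a i j k l) (coverElt a i j k l)).comap fun x => .inr (.inl x) := by
  refine Setoid.eqvGen_le ?_
  rintro u v (⟨⟨-, huv⟩, hne⟩ | ⟨⟨-, huv⟩, hne⟩)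
  · refine le_comap_downEmb_stackSetoid (x := .inl u) (y := .inl v) (.rel _ _ (.inl ⟨huv, ?_, ?_⟩))
    · simpa [pair_eq_pair_iff_sym2_eq] using hne
    · simp [pair_eq_pair_iff_sym2_eq]
  · refine le_comap_upEmb_stackSetoid (x := .inr u) (y := .inr v) (.rel _ _ (.inl ⟨huv, ?_, ?_⟩))
    · simp [pair_eq_pair_iff_sym2_eq]
    · simpa [pair_eq_pair_iff_sym2_eq] using hne

theorem redSetoid_rel_column (hθ : IsCycleComp a θ) (ha : ∀ x, blockCard a x ≤ 2)
    {x y : PV n} (hx : column x ∈ θ) (hxy : a.r x y)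
    (hlow : s(x, y) ≠ s(.inl k, .inl l)) (hup : s(x, y) ≠ s(.inr i, .inr j)) :
    redSetoid a i j k l (column x) (column y) := by
  have hred {u v : Fin n} (huv : u ≠ v → redEdge a i j k l u v) : redSetoid a i j k l u v := by
    by_cases he : u = v
    exacts [he ▸ Setoid.refl' _ u, .rel _ _ (huv he)]
  rcases x with u | u
  · obtain ⟨v, rfl⟩ := exists_inl_of_rel_inl (ha _) (hθ.2 u hx).1 hxy
    exact hred (u := u) (v := v) fun hne => .inl ⟨⟨hne, hxy⟩, by
      simpa [pair_eq_pair_iff_sym2_eq] using hlow⟩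
  · obtain ⟨v, rfl⟩ := exists_inr_of_rel_inr (ha _) (hθ.2 u hx).2 hxy
    exact hred (u := u) (v := v) fun hne => .inr ⟨⟨hne, hxy⟩, by
      simpa [pair_eq_pair_iff_sym2_eq] using hup⟩

namespace IsCycleRows

variable {A B : Set (Fin n)}

theorem mem_of_rel (hAB : IsCycleRows a θ i j k l A B)
    (hθ : IsCycleComp a θ) (ha : ∀ x, blockCard a x ≤ 2) {x y : PV n} (hx : x ∈ rows A B)
    (hxy : a.r x y) : y ∈ rows A B := by
  rcases x with u | u
  · obtain ⟨v, rfl⟩ := exists_inl_of_rel_inl (ha _) (hθ.2 u (hAB.subset_low hx)).1 hxy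
    by_cases huv : u = v
    exacts [huv ▸ hx, hAB.low_closed u hx v ⟨huv, hxy⟩]
  · obtain ⟨v, rfl⟩ := exists_inr_of_rel_inr (ha _) (hθ.2 u (hAB.subset_up hx)).2 hxy
    by_cases huv : u = v
    exacts [huv ▸ hx, hAB.up_closed u hx v ⟨huv, hxy⟩]

theorem freed_subset (hAB : IsCycleRows a θ i j k l A B) :
    freed i j k l ⊆ rows A B := by
  rintro (u | v) hx
  exacts [hAB.low_subset hx, hAB.up_subset hx]

theorem column_mem (hAB : IsCycleRows a θ i j k l A B)
    {x : PV n} (hx : x ∈ rows A B) : column x ∈ θ := by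
  rcases x with u | v
  exacts [hAB.subset_low hx, hAB.subset_up hx]

theorem coverElt_le_piecewiseSetoid (hAB : IsCycleRows a θ i j k l A B) (hθ : IsCycleComp a θ)
    (ha : ∀ x, blockCard a x ≤ 2) {s : Setoid (PV n)} (has : a ≤ s) :
    coverElt a i j k l ≤ piecewiseSetoid (rows A B) ((redSetoid a i j k l).comap column) s := by
  refine Setoid.eqvGen_le ?_
  rintro x y (⟨hxy, hlow, hup⟩ | ⟨u, v, hu, hv, huv, hxy⟩)
  · rw [Ne, pair_eq_pair_iff_sym2_eq] at hlow hup
    by_cases hx : x ∈ rows A B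
    · exact .inl ⟨hx, hAB.mem_of_rel hθ ha hx hxy,
        redSetoid_rel_column hθ ha (hAB.column_mem hx) hxy hlow hup⟩
    · exact .inr ⟨hx, fun hy => hx (hAB.mem_of_rel hθ ha hy (a.symm hxy)), has hxy⟩
  · have hu' : .inl u ∈ rows A B := hAB.freed_subset hu
    have hv' : .inr v ∈ rows A B := hAB.freed_subset hv
    rcases hxy with ⟨rfl, rfl⟩ | ⟨rfl, rfl⟩
    exacts [.inl ⟨hu', hv', huv⟩, .inl ⟨hv', hu', Setoid.symm' _ huv⟩]

theorem le_piecewiseSetoid_top (hAB : IsCycleRows a θ i j k l A B) (hθ : IsCycleComp a θ)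
    (ha : ∀ x, blockCard a x ≤ 2) {s : Setoid (PV n)}
    (hs : coverElt a i j k l ≤ s) : a ≤ piecewiseSetoid (rows A B) ⊤ s := by
  intro x y hxy
  by_cases hx : x ∈ rows A B
  · exact .inl ⟨hx, hAB.mem_of_rel hθ ha hx hxy, trivial⟩
  · exact .inr ⟨hx, fun hy => hx (hAB.mem_of_rel hθ ha hy (a.symm hxy)),
      hs (coverElt_rel_of_rel hxy fun hx' => hx (hAB.freed_subset hx'))⟩

end IsCycleRows

namespace IsCyclePair

theorem subset_up (h : IsCyclePair a θ i j k l) : {i, j} ⊆ θ :=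
  Set.pair_subset h.mem_up (h.isCycleComp.1.mem_of_upEdge h.mem_up h.upEdge)

theorem subset_low (h : IsCyclePair a θ i j k l) : {k, l} ⊆ θ :=
  Set.pair_subset h.mem_low (h.isCycleComp.1.mem_of_lowEdge h.mem_low h.lowEdge)

theorem isCycleRows_freed (h : IsCyclePair a θ i j k l) (ha : ∀ x, blockCard a x ≤ 2) :
    IsCycleRows a θ i j k l {k, l} {i, j} where
  low_subset := le_rfl
  up_subset := le_rfl
  subset_low := h.subset_low
  subset_up := h.subset_up
  low_closed _ hu _ := mem_pair_of_lowEdge ha h.lowEdge hu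
  up_closed _ hu _ := mem_pair_of_upEdge ha h.upEdge hu

theorem isCycleRows_upEmb (h : IsCyclePair a θ i j k l) (ha : ∀ x, blockCard a x ≤ 2) :
    IsCycleRows a θ i j k l {k, l} θ where
  low_subset := le_rfl
  up_subset := h.subset_up
  subset_low := h.subset_low
  subset_up := le_rfl
  low_closed _ hu _ := mem_pair_of_lowEdge ha h.lowEdge hu
  up_closed _ hu _ := h.isCycleComp.1.mem_of_upEdge hu

theorem isCycleRows_downEmb (h : IsCyclePair a θ i j k l) (ha : ∀ x, blockCard a x ≤ 2) :
    IsCycleRows a θ i j k l θ {i, j} where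
  low_subset := h.subset_low
  up_subset := le_rfl
  subset_low := le_rfl
  subset_up := h.subset_up
  low_closed _ hu _ := h.isCycleComp.1.mem_of_lowEdge hu
  up_closed _ hu _ := mem_pair_of_upEdge ha h.upEdge hu

theorem exists_mem_up_redSetoid_rel (h : IsCyclePair a θ i j k l) (ha : ∀ x, blockCard a x ≤ 2)
    {u : Fin n} (hu : u ∈ ({k, l} : Set (Fin n))) :
    ∃ v ∈ ({i, j} : Set (Fin n)), redSetoid a i j k l u v := by
  have hθ := h.isCycleComp
  have huθ := h.subset_low hu
  have hmem {x} (hx : (lowGraph a ⊔ upGraph a).Reachable u x) : x ∈ θ :=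
    hθ.1.mem_of_reachable huθ hx
  simpa using exists_mem_rel_of_alternating_cycle (e := s(k, l)) (f := s(i, j))
    (fun x hx => existsUnique_lowEdge (ha _) (hθ.2 x (hmem hx)).1)
    (fun x hx => existsUnique_upEdge (ha _) (hθ.2 x (hmem hx)).2) h.lowEdge (by simpa using hu)
    (Sym2.mem_mk_left i j) (hθ.1.reachable huθ h.mem_up) (r := redSetoid a i j k l)
    (fun x y hxy hne => .rel _ _ (.inl ⟨hxy, pair_eq_pair_iff_sym2_eq.not.2 hne⟩))
    (fun x y hxy hne => .rel _ _ (.inr ⟨hxy, pair_eq_pair_iff_sym2_eq.not.2 hne⟩))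

theorem exists_mem_low_redSetoid_rel (h : IsCyclePair a θ i j k l) (ha : ∀ x, blockCard a x ≤ 2)
    {v : Fin n} (hv : v ∈ ({i, j} : Set (Fin n))) :
    ∃ u ∈ ({k, l} : Set (Fin n)), redSetoid a i j k l v u := by
  have hθ := h.isCycleComp
  have hvθ := h.subset_up hv
  have hmem {x} (hx : (upGraph a ⊔ lowGraph a).Reachable v x) : x ∈ θ :=
    hθ.1.mem_of_reachable hvθ (sup_comm (lowGraph a) _ ▸ hx)
  simpa using exists_mem_rel_of_alternating_cycle (e := s(i, j)) (f := s(k, l))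
    (fun x hx => existsUnique_upEdge (ha _) (hθ.2 x (hmem hx)).2)
    (fun x hx => existsUnique_lowEdge (ha _) (hθ.2 x (hmem hx)).1) h.upEdge (by simpa using hv)
    (Sym2.mem_mk_left k l) (sup_comm (lowGraph a) _ ▸ hθ.1.reachable hvθ h.mem_low)
    (r := redSetoid a i j k l)
    (fun x y hxy hne => .rel _ _ (.inr ⟨hxy, pair_eq_pair_iff_sym2_eq.not.2 hne⟩))
    (fun x y hxy hne => .rel _ _ (.inl ⟨hxy, pair_eq_pair_iff_sym2_eq.not.2 hne⟩))

theorem coverElt_rel_inr (h : IsCyclePair a θ i j k l) (ha : ∀ x, blockCard a x ≤ 2)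
    {x : PV n} (hx : x ∈ freed i j k l) {v : Fin n} (hv : v ∈ ({i, j} : Set (Fin n)))
    (hxv : redSetoid a i j k l (column x) v) : coverElt a i j k l x (.inr v) := by
  rcases x with u | w
  · exact coverElt_rel_inl_inr hx hv hxv
  · obtain ⟨u, hu, hwu⟩ := h.exists_mem_low_redSetoid_rel ha hx
    have huw := Setoid.symm' _ hwu
    exact Setoid.trans' _ (Setoid.symm' _ (coverElt_rel_inl_inr hu hx huw))
      (coverElt_rel_inl_inr hu hv (Setoid.trans' _ huw hxv))

theorem coverElt_eq_piecewiseSetoid (h : IsCyclePair a θ i j k l) (ha : ∀ x, blockCard a x ≤ 2) :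
    coverElt a i j k l =
      piecewiseSetoid (freed i j k l) ((redSetoid a i j k l).comap column) a := by
  refine le_antisymm
    ((h.isCycleRows_freed ha).coverElt_le_piecewiseSetoid h.isCycleComp ha le_rfl) ?_
  rintro x y (⟨hx, hy, hxy⟩ | ⟨hx, -, hxy⟩)
  · obtain ⟨v, hv, hyv⟩ : ∃ v ∈ ({i, j} : Set (Fin n)), redSetoid a i j k l (column y) v := by
      rcases y with u | v
      exacts [h.exists_mem_up_redSetoid_rel ha hy, ⟨v, hy, Setoid.refl' _ v⟩]
    exact Setoid.trans' _ (h.coverElt_rel_inr ha hx hv (Setoid.trans' _ hxy hyv))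
      (Setoid.symm' _ (h.coverElt_rel_inr ha hy hv hyv))
  · exact coverElt_rel_of_rel hxy hx

theorem stackSetoid_coverElt_le (h : IsCyclePair a θ i j k l) (ha : ∀ x, blockCard a x ≤ 2) :
    stackSetoid (coverElt a i j k l) (coverElt a i j k l) ≤
      piecewiseSetoid (stackCycle θ i j k l) ((redSetoid a i j k l).comap stackColumn)
        (stackSetoid a a) := by
  simp_rw [stackSetoid_le_iff, comap_piecewiseSetoid, comap_stackColumn_upEmb,
    comap_stackColumn_downEmb, upEmb_preimage_stackCycle, downEmb_preimage_stackCycle]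
  exact ⟨(h.isCycleRows_upEmb ha).coverElt_le_piecewiseSetoid h.isCycleComp ha
      le_comap_upEmb_stackSetoid,
    (h.isCycleRows_downEmb ha).coverElt_le_piecewiseSetoid h.isCycleComp ha
      le_comap_downEmb_stackSetoid⟩

theorem stackSetoid_le_piecewiseSetoid_top (h : IsCyclePair a θ i j k l)
    (ha : ∀ x, blockCard a x ≤ 2) :
    stackSetoid a a ≤ piecewiseSetoid (stackCycle θ i j k l) ⊤
      (stackSetoid (coverElt a i j k l) (coverElt a i j k l)) := by
  rw [stackSetoid_le_iff, comap_piecewiseSetoid, comap_piecewiseSetoid,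
    upEmb_preimage_stackCycle, downEmb_preimage_stackCycle]
  exact ⟨(h.isCycleRows_upEmb ha).le_piecewiseSetoid_top h.isCycleComp ha
      le_comap_upEmb_stackSetoid,
    (h.isCycleRows_downEmb ha).le_piecewiseSetoid_top h.isCycleComp ha
      le_comap_downEmb_stackSetoid⟩

theorem stackSetoid_coverElt_rel_middle (h : IsCyclePair a θ i j k l)
    (ha : ∀ x, blockCard a x ≤ 2) {x : TV n} (hx : x ∈ stackCycle θ i j k l) :
    stackSetoid (coverElt a i j k l) (coverElt a i j k l) x (.inr (.inl (stackColumn x))) := by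
  rcases x with u | u | v
  · obtain ⟨v, hv, huv⟩ := h.exists_mem_up_redSetoid_rel ha hx
    exact Setoid.trans' _ (le_comap_upEmb_stackSetoid (coverElt_rel_inl_inr hx hv huv))
      (Setoid.symm' _ (redSetoid_le_comap_stackSetoid huv))
  · exact Setoid.refl' _ _
  · obtain ⟨u, hu, hvu⟩ := h.exists_mem_low_redSetoid_rel ha hx
    have huv := coverElt_rel_inl_inr hu hx (Setoid.symm' _ hvu)
    exact Setoid.trans' _ (Setoid.symm' _ (le_comap_downEmb_stackSetoid huv))
      (Setoid.symm' _ (redSetoid_le_comap_stackSetoid hvu))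

theorem stackSetoid_coverElt (h : IsCyclePair a θ i j k l) (ha : ∀ x, blockCard a x ≤ 2) :
    stackSetoid (coverElt a i j k l) (coverElt a i j k l) =
      piecewiseSetoid (stackCycle θ i j k l) ((redSetoid a i j k l).comap stackColumn)
        (stackSetoid a a) := by
  refine le_antisymm (h.stackSetoid_coverElt_le ha) ?_
  rintro x y (⟨hx, hy, hxy⟩ | ⟨hx, -, hxy⟩)
  · exact Setoid.trans' _ (h.stackSetoid_coverElt_rel_middle ha hx)
      (Setoid.trans' _ (redSetoid_le_comap_stackSetoid hxy)
        (Setoid.symm' _ (h.stackSetoid_coverElt_rel_middle ha hy)))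
  · rcases h.stackSetoid_le_piecewiseSetoid_top ha hxy with ⟨hx', -, -⟩ | ⟨-, -, hxy'⟩
    exacts [absurd hx' hx, hxy']

theorem pmul_coverElt (h : IsCyclePair a θ i j k l) (ha : ∀ x, blockCard a x ≤ 2) :
    pmul (coverElt a i j k l) (coverElt a i j k l) =
      piecewiseSetoid (freed i j k l) ((redSetoid a i j k l).comap column) (pmul a a) := by
  simp_rw [pmul, h.stackSetoid_coverElt ha, comap_piecewiseSetoid, outEmb_preimage_stackCycle,
    comap_stackColumn_outEmb]

theorem two_le_blockCard_coverElt (h : IsCyclePair a θ i j k l) (ha : ∀ x, blockCard a x ≤ 2)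
    (ha' : ∀ x, 2 ≤ blockCard a x) (x : PV n) : 2 ≤ blockCard (coverElt a i j k l) x := by
  rw [two_le_blockCard_iff]
  by_cases hx : x ∈ freed i j k l
  · rcases x with u | v
    · obtain ⟨v, hv, huv⟩ := h.exists_mem_up_redSetoid_rel ha hx
      exact ⟨.inr v, Sum.inr_ne_inl, coverElt_rel_inl_inr hx hv huv⟩
    · obtain ⟨u, hu, hvu⟩ := h.exists_mem_low_redSetoid_rel ha hx
      exact ⟨.inl u, Sum.inl_ne_inr,
        Setoid.symm' _ (coverElt_rel_inl_inr hu hx (Setoid.symm' _ hvu))⟩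
  · obtain ⟨y, hyx, hxy⟩ := two_le_blockCard_iff.1 (ha' x)
    exact ⟨y, hyx, coverElt_rel_of_rel hxy hx⟩

end IsCyclePair

end Cover

theorem theta_cover_preserves_general {n : ℕ} {a : PElt n} (ha : ∀ x, blockCard a x ≤ 2)
    {θ : Set (Fin n)} {i j k l : Fin n} (h : IsCyclePair a θ i j k l) :
    (pmul a a = a → pmul (coverElt a i j k l) (coverElt a i j k l) = coverElt a i j k l) ∧
      ((∀ x, 2 ≤ blockCard a x) → ∀ x, 2 ≤ blockCard (coverElt a i j k l) x) :=
  ⟨fun hidem => by rw [h.pmul_coverElt ha, hidem, ← h.coverElt_eq_piecewiseSetoid ha],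
    h.two_le_blockCard_coverElt ha⟩

/-- Proposition 3.4. Let `δ ∈ D`, `θ ∈ Θ(δ)` and `α, β ∈ M_n` with
`α ≺_θ β`. Then (i) if `α` is an idempotent of `M_n` then so is `β`, and (ii) if
`α ∈ J_n` then `β ∈ J_n`. -/
theorem theta_cover_preserves (n : ℕ) (d : PElt n) (hd : d ∈ Dset (Motzkin n))
    (θ : Set (Fin n)) (hθ : θ ∈ ThetaSet d) (a b : PElt n)
    (ha : a ∈ Motzkin n) (hb : b ∈ Motzkin n) (hcov : IsThetaCover a θ b) :
    (pmul a a = a → pmul b b = b) ∧ (a ∈ Jones n → b ∈ Jones n) := by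
  obtain ⟨⟨hcycle, -⟩, i, j, k, l, hi, -, hk, -, ⟨hij, haij, -⟩, ⟨hkl, hakl, -⟩, rfl⟩ := hcov
  obtain ⟨hidem, hcard⟩ :=
    theta_cover_preserves_general ha.2 ⟨hcycle, ⟨hij.ne, haij⟩, ⟨hkl.ne, hakl⟩, hi, hk⟩
  exact ⟨hidem, fun hJ => ⟨hb.1, fun x => (hb.2 x).antisymm (hcard (fun x => (hJ.2 x).ge) x)⟩⟩
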